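/- arXiv:2009.11682 — 2 statements merged into one kernel-verified Lean document; each statement's English description precedes it below -/
import Mathlib

section
/- Let n ≥ 1, let m₁,…,m_n be positive integers with N = Σ_{i=1}^n m_i, and let r, s, q ∈ ℂ satisfy r + 4s + 2q(m_i − 1) ≠ 0 for every i, q(r + 8s + 2(N−2)q) ≠ 0, and h = r + 4s + 2q(N−1) ≠ 0. Let 𝒜̃ be the configuration in ℂ^n consisting of the covectors f^i with multiplicity r·m_i (1 ≤ i ≤ n), 2f^i with multiplicity s·m_i + (1/2)q·m_i(m_i − 1) (1 ≤ i ≤ n), and f^i ± f^j with multiplicity q·m_i m_j (1 ≤ i < j ≤ n), where f^1,…,f^n is the standard dual basis of (ℂ^n)*. Let λ ∈ ℂ satisfy λ² = 2h³ / ( q(r + 8s + 2(N−2)q) ). Then (𝒜̃, c, λ) satisfies the trigonometric WDVV equations; in particular the quadratic part equals Σ_{α∈𝒜̃} c_α α(ξ)² = h Σ_{i=1}^n m_i ξ_i². -/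
open scoped Classical
open Finset

noncomputable section

/-- Evaluation of a covector `α` on a vector `x` in `ℂ^N`. -/
def ev {N : ℕ} (α x : Fin N → ℂ) : ℂ := ∑ i, α i * x i

/-- The bilinear form `G_𝒜` associated to a configuration. -/
def Gform {N : ℕ} (A : Finset (Fin N → ℂ)) (c : (Fin N → ℂ) → ℂ)
    (u v : Fin N → ℂ) : ℂ :=
  ∑ α ∈ A, c α * ev α u * ev α v

/-- `(α ∧ β)(a, b) = α(a)β(b) - α(b)β(a)`. -/
def wedge {N : ℕ} (α β a b : Fin N → ℂ) : ℂ :=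
  ev α a * ev β b - ev α b * ev β a

/-- Non-degeneracy of `G_𝒜`. -/
def Nondeg {N : ℕ} (A : Finset (Fin N → ℂ)) (c : (Fin N → ℂ) → ℂ) : Prop :=
  ∀ u : Fin N → ℂ, (∀ v : Fin N → ℂ, Gform A c u v = 0) → u = 0

/-- `dual` assigns to each covector `γ ∈ 𝒜` its `G_𝒜`-dual vector `γ^∨`. -/
def IsDual {N : ℕ} (A : Finset (Fin N → ℂ)) (c : (Fin N → ℂ) → ℂ)
    (dual : (Fin N → ℂ) → Fin N → ℂ) : Prop :=
  ∀ γ ∈ A, ∀ v : Fin N → ℂ, Gform A c (dual γ) v = ev γ v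

/-- `γ` is proportional to `α`. -/
def Collin {N : ℕ} (α γ : Fin N → ℂ) : Prop := ∃ t : ℂ, γ = t • α

/-- `γ₁ ∼ γ₂` iff `γ₁ + γ₂` or `γ₁ - γ₂` is an integer multiple of `α`. -/
def SeriesRel {N : ℕ} (α γ₁ γ₂ : Fin N → ℂ) : Prop :=
  ∃ m : ℤ, γ₁ + γ₂ = (m : ℂ) • α ∨ γ₁ - γ₂ = (m : ℂ) • α

/-- `Γ` is an (maximal) `α`-series of the configuration `A`. -/
def IsSeries {N : ℕ} (A : Finset (Fin N → ℂ)) (α : Fin N → ℂ)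
    (Γ : Finset (Fin N → ℂ)) : Prop :=
  Γ.Nonempty ∧ (∀ γ ∈ Γ, γ ∈ A ∧ ¬ Collin α γ) ∧
    (∀ γ₁ ∈ Γ, ∀ γ₂ ∈ Γ, SeriesRel α γ₁ γ₂) ∧
    (∀ β ∈ A, ¬ Collin α β → (∃ γ ∈ Γ, SeriesRel α β γ) → β ∈ Γ)

/-- The trigonometric ∨-conditions. -/
def IsTrigVSystem {N : ℕ} (A : Finset (Fin N → ℂ)) (c : (Fin N → ℂ) → ℂ)
    (dual : (Fin N → ℂ) → Fin N → ℂ) : Prop :=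
  ∀ α ∈ A, ∀ Γ : Finset (Fin N → ℂ), IsSeries A α Γ →
    ∀ a b : Fin N → ℂ, ∑ β ∈ Γ, c β * ev α (dual β) * wedge α β a b = 0

/-- The form `G^{(1)}_𝒜` evaluated at `(u, v)`. -/
def G1form {N : ℕ} (A : Finset (Fin N → ℂ)) (c : (Fin N → ℂ) → ℂ)
    (u v : Fin N → ℂ) : ℂ :=
  ∑ α ∈ A, ∑ β ∈ A, c α * c β * wedge α β u v ^ 2

/-- The form `G^{(2)}_𝒜` evaluated at `(u, v)`. -/
def G2form {N : ℕ} (A : Finset (Fin N → ℂ)) (c : (Fin N → ℂ) → ℂ)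
    (dual : (Fin N → ℂ) → Fin N → ℂ) (u v : Fin N → ℂ) : ℂ :=
  ∑ α ∈ A, ∑ β ∈ A,
    c α * c β * Gform A c (dual α) (dual β) * wedge α β u v ^ 2

/-- Complex cotangent. -/
def ccot (z : ℂ) : ℂ := Complex.cos z / Complex.sin z

/-- The matrix `F_i(x)` of third derivatives of the prepotential, `1 ≤ i ≤ N`. -/
def Fmat {N : ℕ} (A : Finset (Fin N → ℂ)) (c : (Fin N → ℂ) → ℂ) (lam : ℂ)
    (i : Fin N) (x : Fin N → ℂ) : Matrix (Fin N ⊕ Unit) (Fin N ⊕ Unit) ℂ :=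
  Matrix.of fun p q =>
    match p, q with
    | Sum.inl p, Sum.inl q => lam * ∑ α ∈ A, c α * α i * α p * α q * ccot (ev α x)
    | Sum.inl p, Sum.inr _ => 2 * ∑ α ∈ A, c α * α i * α p
    | Sum.inr _, Sum.inl q => 2 * ∑ α ∈ A, c α * α i * α q
    | Sum.inr _, Sum.inr _ => 0

/-- The constant matrix `F_{N+1}`. -/
def Flast {N : ℕ} (A : Finset (Fin N → ℂ)) (c : (Fin N → ℂ) → ℂ) :
    Matrix (Fin N ⊕ Unit) (Fin N ⊕ Unit) ℂ :=
  Matrix.of fun p q =>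
    match p, q with
    | Sum.inl p, Sum.inl q => 2 * ∑ α ∈ A, c α * α p * α q
    | Sum.inr _, Sum.inr _ => 2
    | _, _ => 0

/-- `(𝒜, c, λ)` satisfies the trigonometric WDVV equations. -/
def SatisfiesWDVV {N : ℕ} (A : Finset (Fin N → ℂ)) (c : (Fin N → ℂ) → ℂ)
    (lam : ℂ) : Prop :=
  IsUnit (Flast A c) ∧
    ∀ x : Fin N → ℂ, (∀ α ∈ A, Complex.sin (ev α x) ≠ 0) →
      ∀ i j : Fin N,
        Fmat A c lam i x * (Flast A c)⁻¹ * Fmat A c lam j x =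
          Fmat A c lam j x * (Flast A c)⁻¹ * Fmat A c lam i x

/-- The covectors of `𝒜` lie in a lattice of full rank `N` in `(ℂ^N)^*`. -/
def InLattice {N : ℕ} (A : Finset (Fin N → ℂ)) : Prop :=
  ∃ L : Fin N → Fin N → ℂ, LinearIndependent ℂ L ∧
    ∀ α ∈ A, ∃ m : Fin N → ℤ, α = ∑ i, (m i : ℂ) • L i

/-- No two covectors of `𝒜` are negatively proportional. -/
def PositiveSystem {N : ℕ} (A : Finset (Fin N → ℂ)) : Prop :=
  ∀ α ∈ A, ∀ t : ℝ, t < 0 → (t : ℂ) • α ∉ A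

/-- The standard covector `e^i` of `(ℂ^N)^*`. -/
def esgl (N : ℕ) (i : Fin N) : Fin N → ℂ := Pi.single i 1

/-- The set of covectors of the configuration `BC_N⁺`:
`e^i`, `2e^i` (`1 ≤ i ≤ N`) and `e^i ± e^j` (`1 ≤ i < j ≤ N`). -/
def BCfin (N : ℕ) : Finset (Fin N → ℂ) :=
  (Finset.univ.image (fun i : Fin N => esgl N i)) ∪
  (Finset.univ.image (fun i : Fin N => (2 : ℂ) • esgl N i)) ∪
  ((Finset.univ.filter (fun p : Fin N × Fin N => p.1 < p.2)).image
    (fun p => esgl N p.1 + esgl N p.2)) ∪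
  ((Finset.univ.filter (fun p : Fin N × Fin N => p.1 < p.2)).image
    (fun p => esgl N p.1 - esgl N p.2))

/-!
Write `G` for `gramMatrix A c`, `Tᵢ` for `cotMatrix A c x i` and `gᵢ` for the rows of `G`.
Multiplying out the block matrices `Fᵢ F_{N+1}⁻¹ Fⱼ` shows that, outside the top left corner, the
WDVV equations follow from the symmetry of `G` and of the third derivatives; the corner is the
curvature identity `λ² (Tᵢ G⁻¹ Tⱼ - Tⱼ G⁻¹ Tᵢ) = 4 (gⱼ gᵢᵀ - gᵢ gⱼᵀ)`.

For the restricted `BC` configuration `G = h diag(m)`, and all the cotangents in `Tᵢ` that involve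
two coordinates combine into `U(a, b) = cot (a + b) - cot (a - b)` with
`cot (a + b) + cot (a - b) = U(b, a)`. As `U(a, b) = 2 sin 2b / (cos 2a - cos 2b)`, partial
fractions in the `cos 2xₖ` give the exchange relation
`U(a, b) U(a, d) = U(a, b) U(b, d) + U(a, d) U(d, b)`, which cancels every entry of the commutator
except those in positions `(i, j)` and `(j, i)`, and the cyclic relation
`U(b, a) U(d, a) + U(a, b) U(d, b) + U(a, d) U(b, d) = -4`, which makes these two constant multiples
of `q (r + 8s + 2(N - 2)q)`, matched to the right hand side by the choice of `λ`.
-/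

section Configuration

open Matrix

variable {N : ℕ} (A : Finset (Fin N → ℂ)) (c : (Fin N → ℂ) → ℂ)

/-- The matrix of the bilinear form `Gform A c` in the standard basis. -/
def gramMatrix : Matrix (Fin N) (Fin N) ℂ :=
  of fun p q => ∑ α ∈ A, c α * α p * α q

/-- The matrix in `p`, `q` of third derivatives `∂ᵢ∂ₚ∂_q` of the trigonometric part
`∑ c_α f(α(x))` of the prepotential, where `f''' = cot`; it is the top left block of `Fmat`
up to the factor `lam`. -/
def cotMatrix (x : Fin N → ℂ) (i : Fin N) : Matrix (Fin N) (Fin N) ℂ :=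
  of fun p q => ∑ α ∈ A, c α * α i * α p * α q * ccot (ev α x)

lemma gramMatrix_isSymm : (gramMatrix A c).IsSymm :=
  IsSymm.ext fun _ _ => sum_congr rfl fun _ _ => mul_right_comm _ _ _

lemma cotMatrix_isSymm (x : Fin N → ℂ) (i : Fin N) : (cotMatrix A c x i).IsSymm :=
  IsSymm.ext fun _ _ => sum_congr rfl fun _ _ => by ring

lemma cotMatrix_row_comm (x : Fin N → ℂ) (i j : Fin N) :
    cotMatrix A c x i j = cotMatrix A c x j i :=
  funext fun _ => sum_congr rfl fun _ _ => by ring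

lemma sum_mul_ev_sq (x : Fin N → ℂ) :
    ∑ α ∈ A, c α * ev α x ^ 2 = x ⬝ᵥ gramMatrix A c *ᵥ x := by
  simp only [ev, sq, dotProduct, mulVec, gramMatrix, of_apply, mul_sum, sum_mul]
  rw [sum_comm]
  refine sum_congr rfl fun p _ => ?_
  rw [sum_comm]
  exact sum_congr rfl fun q _ => sum_congr rfl fun α _ => by ring

lemma Flast_eq_fromBlocks :
    Flast A c = fromBlocks ((2 : ℂ) • gramMatrix A c) 0 0 ((2 : ℂ) • 1) := by
  ext (_ | _) (_ | _) <;> simp [Flast, gramMatrix]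

lemma Fmat_eq_fromBlocks (lam : ℂ) (i : Fin N) (x : Fin N → ℂ) :
    Fmat A c lam i x = fromBlocks (lam • cotMatrix A c x i)
      ((2 : ℂ) • replicateCol Unit (gramMatrix A c i))
      ((2 : ℂ) • replicateRow Unit (gramMatrix A c i)) 0 := by
  ext (_ | _) (_ | _) <;> simp [Fmat, gramMatrix, cotMatrix]

variable {A c}

lemma Flast_mul_fromBlocks_inv (hG : IsUnit (gramMatrix A c)) :
    Flast A c * fromBlocks ((2⁻¹ : ℂ) • (gramMatrix A c)⁻¹) 0 0 ((2⁻¹ : ℂ) • 1) = 1 := by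
  simp [Flast_eq_fromBlocks, fromBlocks_multiply, smul_smul,
    mul_nonsing_inv _ ((isUnit_iff_isUnit_det _).1 hG)]

lemma mul_gramMatrix_inv_mulVec_row (hG : IsUnit (gramMatrix A c))
    (M : Matrix (Fin N) (Fin N) ℂ) (j : Fin N) :
    (M * (gramMatrix A c)⁻¹) *ᵥ gramMatrix A c j = M.col j := by
  have hrow : gramMatrix A c j = gramMatrix A c *ᵥ Pi.single j 1 := by
    rw [mulVec_single_one]
    exact (congrFun (gramMatrix_isSymm A c) j).symm
  rw [hrow, mulVec_mulVec, nonsing_inv_mul_cancel_right _ _ ((isUnit_iff_isUnit_det _).1 hG),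
    mulVec_single_one]

lemma row_vecMul_gramMatrix_inv_mul (hG : IsUnit (gramMatrix A c))
    (M : Matrix (Fin N) (Fin N) ℂ) (i : Fin N) :
    gramMatrix A c i ᵥ* ((gramMatrix A c)⁻¹ * M) = M i := by
  have hrow : gramMatrix A c i = Pi.single i 1 ᵥ* gramMatrix A c :=
    (single_one_vecMul i _).symm
  rw [hrow, vecMul_vecMul, mul_nonsing_inv_cancel_left _ _ ((isUnit_iff_isUnit_det _).1 hG),
    single_one_vecMul]
  rfl

lemma Fmat_mul_Flast_inv_mul_Fmat (hG : IsUnit (gramMatrix A c)) (lam : ℂ) (x : Fin N → ℂ)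
    (i j : Fin N) :
    Fmat A c lam i x * (Flast A c)⁻¹ * Fmat A c lam j x = fromBlocks
      ((lam ^ 2 / 2) • (cotMatrix A c x i * (gramMatrix A c)⁻¹ * cotMatrix A c x j) +
        (2 : ℂ) • vecMulVec (gramMatrix A c i) (gramMatrix A c j))
      (lam • replicateCol Unit (cotMatrix A c x i j))
      (lam • replicateRow Unit (cotMatrix A c x j i))
      (of fun _ _ => 2 * gramMatrix A c i j) := by
  have hcol : cotMatrix A c x i * (gramMatrix A c)⁻¹ * replicateCol Unit (gramMatrix A c j) =
      replicateCol Unit (cotMatrix A c x i j) := by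
    rw [← replicateCol_mulVec, mul_gramMatrix_inv_mulVec_row hG]
    exact congrArg _ (congrFun (cotMatrix_isSymm A c x i) j)
  have hrow : replicateRow Unit (gramMatrix A c i) * (gramMatrix A c)⁻¹ * cotMatrix A c x j =
      replicateRow Unit (cotMatrix A c x j i) := by
    rw [Matrix.mul_assoc, ← replicateRow_vecMul, row_vecMul_gramMatrix_inv_mul hG]
  have hcorner : replicateRow Unit (gramMatrix A c i) * (gramMatrix A c)⁻¹ *
      replicateCol Unit (gramMatrix A c j) = of fun _ _ => gramMatrix A c i j := by
    rw [Matrix.mul_assoc, ← replicateCol_mulVec, ← one_mul (gramMatrix A c)⁻¹,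
      mul_gramMatrix_inv_mulVec_row hG]
    ext
    simp [mul_apply, one_apply]
  rw [inv_eq_right_inv (Flast_mul_fromBlocks_inv hG), Fmat_eq_fromBlocks, Fmat_eq_fromBlocks,
    fromBlocks_multiply, fromBlocks_multiply, fromBlocks_inj]
  refine ⟨?_, ?_, ?_, ?_⟩
  · simp only [Matrix.smul_mul, Matrix.mul_smul, Matrix.mul_zero, Matrix.mul_one, add_zero,
      zero_add, vecMulVec_eq Unit]
    module
  · simp [hcol, smul_smul]
  · simp [hrow, smul_smul]
  · ext
    simp [hcorner]

lemma satisfiesWDVV_of_curvature (hG : IsUnit (gramMatrix A c)) {lam : ℂ}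
    (hcurv : ∀ x : Fin N → ℂ, (∀ α ∈ A, Complex.sin (ev α x) ≠ 0) → ∀ i j : Fin N,
      lam ^ 2 • (cotMatrix A c x i * (gramMatrix A c)⁻¹ * cotMatrix A c x j -
          cotMatrix A c x j * (gramMatrix A c)⁻¹ * cotMatrix A c x i) =
        (4 : ℂ) • (vecMulVec (gramMatrix A c j) (gramMatrix A c i) -
          vecMulVec (gramMatrix A c i) (gramMatrix A c j))) :
    SatisfiesWDVV A c lam := by
  refine ⟨IsUnit.of_mul_eq_one _ (Flast_mul_fromBlocks_inv hG), fun x hx i j => ?_⟩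
  rw [Fmat_mul_Flast_inv_mul_Fmat hG, Fmat_mul_Flast_inv_mul_Fmat hG, cotMatrix_row_comm A c x i j,
    (gramMatrix_isSymm A c).apply i j]
  congr 1
  linear_combination (norm := module) (2⁻¹ : ℂ) • hcurv x hx i j

end Configuration
section Cotangent

open Complex

/-- The combination `cot (a + b) - cot (a - b)`, see `ccot_add_sub_ccot_sub`, written so that it
takes the value `0` at `a = b` (through division by zero). -/
def cotDiff (a b : ℂ) : ℂ :=
  2 * sin (2 * b) / (cos (2 * a) - cos (2 * b))

lemma cotDiff_self (a : ℂ) : cotDiff a a = 0 := by simp [cotDiff]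

lemma cos_two_mul_sub_cos_two_mul (a b : ℂ) :
    cos (2 * a) - cos (2 * b) = -2 * sin (a + b) * sin (a - b) := by
  rw [cos_sub_cos]
  ring_nf

lemma ccot_add_sub_ccot_sub {a b : ℂ} (hadd : sin (a + b) ≠ 0) (hsub : sin (a - b) ≠ 0) :
    ccot (a + b) - ccot (a - b) = cotDiff a b := by
  have hsin : sin (2 * b) = sin ((a + b) - (a - b)) := by ring_nf
  rw [cotDiff, cos_two_mul_sub_cos_two_mul, ccot, ccot, hsin, sin_sub (a + b)]
  field_simp
  ring

lemma ccot_add_add_ccot_sub {a b : ℂ} (hadd : sin (a + b) ≠ 0) (hsub : sin (a - b) ≠ 0) :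
    ccot (a + b) + ccot (a - b) = cotDiff b a := by
  have hsin : sin (2 * a) = sin ((a + b) + (a - b)) := by ring_nf
  rw [cotDiff, ← neg_sub (cos _), cos_two_mul_sub_cos_two_mul, ccot, ccot, hsin, sin_add (a + b)]
  field_simp
  ring

lemma ccot_eq_one_add_cos_two_mul_div {a : ℂ} (ha : sin (2 * a) ≠ 0) :
    ccot a = (1 + cos (2 * a)) / sin (2 * a) := by
  have hsin : sin a ≠ 0 := by
    intro h
    simp [sin_two_mul, h] at ha
  rw [ccot, div_eq_div_iff hsin ha, sin_two_mul, cos_two_mul]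
  ring

section Identities

variable {a b d : ℂ}

lemma cotDiff_mul_ccot_add_cotDiff_mul_ccot (ha : sin (2 * a) ≠ 0) (hb : sin (2 * b) ≠ 0)
    (hab : cos (2 * a) ≠ cos (2 * b)) :
    cotDiff b a * ccot a + cotDiff a b * ccot b = -2 := by
  have hab := sub_ne_zero.2 hab
  rw [ccot_eq_one_add_cos_two_mul_div ha, ccot_eq_one_add_cos_two_mul_div hb, cotDiff, cotDiff,
    ← neg_sub (cos (2 * a))]
  field_simp
  ring

lemma cotDiff_mul_ccot_two_mul (ha : sin (2 * a) ≠ 0) (hab : cos (2 * a) ≠ cos (2 * b)) :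
    cotDiff b a * ccot (2 * a) = (cotDiff b a ^ 2 - cotDiff a b ^ 2) / 4 - 1 := by
  have hab := sub_ne_zero.2 hab
  rw [ccot, cotDiff, cotDiff, ← neg_sub (cos (2 * a))]
  field_simp
  linear_combination 4 * (sin_sq_add_cos_sq (2 * b) - sin_sq_add_cos_sq (2 * a))

lemma cotDiff_mul_cotDiff_eq (hab : cos (2 * a) ≠ cos (2 * b)) (had : cos (2 * a) ≠ cos (2 * d))
    (hbd : cos (2 * b) ≠ cos (2 * d)) :
    cotDiff a b * cotDiff a d = cotDiff a b * cotDiff b d + cotDiff a d * cotDiff d b := by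
  have hab := sub_ne_zero.2 hab
  have had := sub_ne_zero.2 had
  have hbd := sub_ne_zero.2 hbd
  simp only [cotDiff, ← neg_sub (cos (2 * b)) (cos (2 * d))]
  field_simp
  ring

lemma cotDiff_cyclic_sum (hab : cos (2 * a) ≠ cos (2 * b)) (had : cos (2 * a) ≠ cos (2 * d))
    (hbd : cos (2 * b) ≠ cos (2 * d)) :
    cotDiff b a * cotDiff d a + cotDiff a b * cotDiff d b + cotDiff a d * cotDiff b d = -4 := by
  have hab := sub_ne_zero.2 hab
  have had := sub_ne_zero.2 had
  have hbd := sub_ne_zero.2 hbd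
  simp only [cotDiff, ← neg_sub (cos (2 * a)), ← neg_sub (cos (2 * b)) (cos (2 * d))]
  field_simp
  linear_combination 4 * ((cos (2 * b) - cos (2 * d)) * sin_sq_add_cos_sq (2 * a)
    - (cos (2 * a) - cos (2 * d)) * sin_sq_add_cos_sq (2 * b)
    + (cos (2 * a) - cos (2 * b)) * sin_sq_add_cos_sq (2 * d))

end Identities

end Cotangent
section Roots

variable {n : ℕ}

lemma esgl_apply (i k : Fin n) : esgl n i k = if k = i then 1 else 0 :=
  Pi.single_apply i 1 k

lemma esgl_apply_comm (i k : Fin n) : esgl n i k = esgl n k i := by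
  simp only [esgl_apply, eq_comm]

lemma sum_mul_esgl (F : Fin n → ℂ) (k : Fin n) : ∑ a, F a * esgl n a k = F k := by
  simp [esgl_apply]

lemma diagonal_apply_eq_mul_esgl (d : Fin n → ℂ) (p k : Fin n) :
    Matrix.diagonal d p k = d p * esgl n p k := by
  simp [Matrix.diagonal_apply, esgl_apply, eq_comm]

lemma sum_sum_mul_esgl (V : Fin n → Fin n → ℂ) (i p k : Fin n) :
    ∑ a, ∑ b, V a b *
      (esgl n b i * esgl n b p * esgl n b k + esgl n b i * esgl n a p * esgl n a k +
        esgl n a i * esgl n b p * esgl n a k + esgl n a i * esgl n a p * esgl n b k) =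
      (∑ a, V a i) * esgl n i p * esgl n i k + V p i * esgl n p k + V i p * esgl n i k +
        V i k * esgl n i p := by
  have hinner : ∀ a, ∑ b, V a b *
      (esgl n b i * esgl n b p * esgl n b k + esgl n b i * esgl n a p * esgl n a k +
        esgl n a i * esgl n b p * esgl n a k + esgl n a i * esgl n a p * esgl n b k) =
      V a i * esgl n i p * esgl n i k + V a i * esgl n a k * esgl n a p +
        V a p * esgl n a k * esgl n a i + V a k * esgl n a p * esgl n a i := by
    intro a
    rw [← sum_mul_esgl (fun b => V a b * esgl n b p * esgl n b k) i, ← sum_mul_esgl (V a) i,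
      ← sum_mul_esgl (V a) p, ← sum_mul_esgl (V a) k]
    simp only [sum_mul, ← sum_add_distrib]
    exact sum_congr rfl fun b _ => by ring
  simp only [hinner, sum_add_distrib, sum_mul_esgl, sum_mul]

lemma ev_add (α β x : Fin n → ℂ) : ev (α + β) x = ev α x + ev β x :=
  add_dotProduct α β x

lemma ev_sub (α β x : Fin n → ℂ) : ev (α - β) x = ev α x - ev β x :=
  sub_dotProduct α β x

lemma ev_smul (t : ℂ) (α x : Fin n → ℂ) : ev (t • α) x = t * ev α x :=
  smul_dotProduct t α x

lemma ev_esgl (i : Fin n) (x : Fin n → ℂ) : ev (esgl n i) x = x i := by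
  simp [ev, esgl_apply]

lemma sum_pow_three_smul_esgl (t : ℂ) (i : Fin n) : ∑ k, (t • esgl n i) k ^ 3 = t ^ 3 := by
  simp [esgl_apply, ite_pow]

lemma sum_pow_three_esgl_add_smul_esgl {i j : Fin n} (hij : i ≠ j) (t : ℂ) :
    ∑ k, (esgl n i + t • esgl n j) k ^ 3 = 1 + t ^ 3 := by
  have hterm : ∀ k, (esgl n i + t • esgl n j) k ^ 3 =
      (if k = i then 1 else 0) + if k = j then t ^ 3 else 0 := by
    intro k
    simp only [Pi.add_apply, Pi.smul_apply, smul_eq_mul, esgl_apply]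
    split_ifs <;> simp_all
  rw [sum_congr rfl fun k _ => hterm k]
  simp [sum_add_distrib]

lemma esgl_injective : Function.Injective (esgl n) :=
  fun i j h => by simpa [esgl_apply] using congrFun h i

lemma two_smul_esgl_injective : Function.Injective fun i : Fin n => (2 : ℂ) • esgl n i :=
  (smul_right_injective _ two_ne_zero).comp esgl_injective

lemma esgl_add_smul_esgl_injOn {t : ℂ} (ht : t ≠ 0) :
    Set.InjOn (fun p : Fin n × Fin n => esgl n p.1 + t • esgl n p.2) {p | p.1 < p.2} := by
  rintro ⟨i, j⟩ (hij : i < j) ⟨k, l⟩ (hkl : k < l) h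
  simp only [esgl, ← Pi.single_smul, smul_eq_mul, mul_one,
    Pi.single_add_single_eq_single_add_single one_ne_zero ht] at h
  obtain ⟨rfl, rfl⟩ | ⟨-, rfl, rfl⟩ | ⟨-, rfl, -⟩ := h
  · rfl
  · exact (lt_asymm hij hkl).elim
  · exact (lt_irrefl _ hij).elim

lemma sum_image_esgl_add_smul_esgl {t : ℂ} (ht : t ≠ 0) (f : (Fin n → ℂ) → ℂ) :
    ∑ α ∈ (univ.filter fun p : Fin n × Fin n => p.1 < p.2).image
        (fun p => esgl n p.1 + t • esgl n p.2), f α =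
      ∑ i, ∑ j ∈ Ioi i, f (esgl n i + t • esgl n j) := by
  rw [sum_image (by simpa using esgl_add_smul_esgl_injOn ht), sum_filter, Fintype.sum_prod_type]
  exact sum_congr rfl fun i _ => by rw [← sum_filter, filter_lt_eq_Ioi]

lemma disjoint_of_sum_pow_three {S T : Finset (Fin n → ℂ)} {u v : ℂ}
    (hS : ∀ α ∈ S, ∑ k, α k ^ 3 = u) (hT : ∀ α ∈ T, ∑ k, α k ^ 3 = v) (huv : u ≠ v) :
    Disjoint S T :=
  disjoint_left.2 fun α hαS hαT => huv ((hS α hαS).symm.trans (hT α hαT))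

lemma sum_BCfin (f : (Fin n → ℂ) → ℂ) :
    ∑ α ∈ BCfin n, f α = ∑ i, (f (esgl n i) + f ((2 : ℂ) • esgl n i)) +
      ∑ i, ∑ j ∈ Ioi i, (f (esgl n i + esgl n j) + f (esgl n i - esgl n j)) := by
  -- The sum of the cubes of the coordinates tells the four families of covectors apart.
  have hsingle : ∀ α ∈ univ.image fun i => esgl n i, ∑ k, α k ^ 3 = 1 :=
    forall_mem_image.2 fun i _ => by simpa using sum_pow_three_smul_esgl 1 i
  have hdouble : ∀ α ∈ univ.image fun i => (2 : ℂ) • esgl n i, ∑ k, α k ^ 3 = 2 ^ 3 :=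
    forall_mem_image.2 fun i _ => sum_pow_three_smul_esgl 2 i
  have hplus : ∀ α ∈ (univ.filter fun p : Fin n × Fin n => p.1 < p.2).image
      fun p => esgl n p.1 + esgl n p.2, ∑ k, α k ^ 3 = 1 + 1 ^ 3 :=
    forall_mem_image.2 fun p hp => by
      simpa using sum_pow_three_esgl_add_smul_esgl (mem_filter.1 hp).2.ne 1
  have hminus : ∀ α ∈ (univ.filter fun p : Fin n × Fin n => p.1 < p.2).image
      fun p => esgl n p.1 - esgl n p.2, ∑ k, α k ^ 3 = 1 + (-1) ^ 3 :=
    forall_mem_image.2 fun p hp => by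
      simpa [← sub_eq_add_neg] using sum_pow_three_esgl_add_smul_esgl (mem_filter.1 hp).2.ne (-1)
  have hadd := sum_image_esgl_add_smul_esgl one_ne_zero f
  have hsub := sum_image_esgl_add_smul_esgl (neg_ne_zero.2 one_ne_zero) f
  simp only [neg_smul, one_smul, ← sub_eq_add_neg] at hadd hsub
  rw [BCfin, sum_union, sum_union, sum_union, hadd, hsub, sum_image esgl_injective.injOn,
    sum_image two_smul_esgl_injective.injOn]
  · simp only [sum_add_distrib, add_assoc]
  · exact disjoint_of_sum_pow_three hsingle hdouble (by norm_num)
  · exact disjoint_union_left.2 ⟨disjoint_of_sum_pow_three hsingle hplus (by norm_num),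
      disjoint_of_sum_pow_three hdouble hplus (by norm_num)⟩
  · exact disjoint_union_left.2 ⟨disjoint_union_left.2
      ⟨disjoint_of_sum_pow_three hsingle hminus (by norm_num),
        disjoint_of_sum_pow_three hdouble hminus (by norm_num)⟩,
      disjoint_of_sum_pow_three hplus hminus (by norm_num)⟩

/-- Absorbing the diagonal terms `g i i` into the covectors `eⁱ` and `2eⁱ` turns the sum over pairs
`i < j` into a full double sum, which can be contracted with Kronecker deltas. -/
lemma sum_BCfin_eq_of_pair {f : (Fin n → ℂ) → ℂ} {d : Fin n → ℂ} {g : Fin n → Fin n → ℂ}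
    (hsingle : ∀ i, f (esgl n i) + f ((2 : ℂ) • esgl n i) = d i + g i i)
    (hpair : ∀ i j, i < j → f (esgl n i + esgl n j) + f (esgl n i - esgl n j) = g j i + g i j) :
    ∑ α ∈ BCfin n, f α = ∑ i, d i + ∑ i, ∑ j, g i j := by
  have hoff : ∀ i, ∑ j ∈ {i}ᶜ, g j i = ∑ j, g j i - g i i := fun i => by
    rw [← sum_compl_add_sum {i}, sum_singleton, add_sub_cancel_right]
  rw [sum_BCfin, sum_congr rfl fun i _ => sum_congr rfl fun j hj => hpair i j (mem_Ioi.1 hj),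
    sum_sum_Ioi_add_eq_sum_sum_off_diag, sum_congr rfl fun i _ => hoff i, sum_comm (f := g),
    sum_congr rfl fun i _ => hsingle i, ← sum_add_distrib, ← sum_add_distrib]
  exact sum_congr rfl fun i _ => by ring

section Regular

variable {x : Fin n → ℂ}

lemma sin_two_mul_ne_zero_of_regular (hx : ∀ α ∈ BCfin n, Complex.sin (ev α x) ≠ 0) (i : Fin n) :
    Complex.sin (2 * x i) ≠ 0 := by
  have hmem : (2 : ℂ) • esgl n i ∈ BCfin n := by simp [BCfin]
  simpa only [ev_smul, ev_esgl] using hx _ hmem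

lemma sin_add_ne_zero_of_regular (hx : ∀ α ∈ BCfin n, Complex.sin (ev α x) ≠ 0) {i j : Fin n}
    (hij : i < j) : Complex.sin (x i + x j) ≠ 0 := by
  have hmem : esgl n i + esgl n j ∈ BCfin n :=
    mem_union_left _ (mem_union_right _ (mem_image.2 ⟨(i, j), by simpa using hij, rfl⟩))
  simpa only [ev_add, ev_esgl] using hx _ hmem

lemma sin_sub_ne_zero_of_regular (hx : ∀ α ∈ BCfin n, Complex.sin (ev α x) ≠ 0) {i j : Fin n}
    (hij : i < j) : Complex.sin (x i - x j) ≠ 0 := by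
  have hmem : esgl n i - esgl n j ∈ BCfin n :=
    mem_union_right _ (mem_image.2 ⟨(i, j), by simpa using hij, rfl⟩)
  simpa only [ev_sub, ev_esgl] using hx _ hmem

lemma cos_two_mul_ne_of_regular (hx : ∀ α ∈ BCfin n, Complex.sin (ev α x) ≠ 0) {i j : Fin n}
    (hij : i ≠ j) : Complex.cos (2 * x i) ≠ Complex.cos (2 * x j) := by
  wlog h : i < j generalizing i j
  · exact (this hij.symm (hij.symm.lt_of_le (not_lt.1 h))).symm
  rw [← sub_ne_zero, cos_two_mul_sub_cos_two_mul]
  exact mul_ne_zero (mul_ne_zero (by norm_num) (sin_add_ne_zero_of_regular hx h))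
    (sin_sub_ne_zero_of_regular hx h)

end Regular

end Roots
section RestrictedBC

open Matrix

variable {n : ℕ}

/-- The multiplicities of the restricted configuration `BC_n(r, s, q; m)`, with arbitrary complex
weights `m i`. -/
structure IsBCMultiplicity (m : Fin n → ℂ) (r s q : ℂ) (c : (Fin n → ℂ) → ℂ) : Prop where
  single : ∀ i, c (esgl n i) = r * m i
  double : ∀ i, c ((2 : ℂ) • esgl n i) = s * m i + q * m i * (m i - 1) / 2
  pair : ∀ i j, i < j → c (esgl n i + esgl n j) = q * m i * m j ∧
    c (esgl n i - esgl n j) = q * m i * m j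

/-- The vector `k ↦ m k * (cot (x i + x k) - cot (x i - x k))`, up to the value at `k = i`. -/
def cotDiffVec (m x : Fin n → ℂ) (i : Fin n) : Fin n → ℂ :=
  fun k => m k * cotDiff (x i) (x k)

/-- The coefficient of the rank one matrix `eᵢ eᵢᵀ` in `bcCotMatrix`. -/
def bcCotCoeff (m : Fin n → ℂ) (r s q : ℂ) (x : Fin n → ℂ) (i : Fin n) : ℂ :=
  r * ccot (x i) + (8 * s + 4 * q * (m i - 1)) * ccot (2 * x i) +
    q * ∑ k, m k * cotDiff (x k) (x i)

/-- The matrix `cotMatrix` of the restricted `BC` configuration divided by `m i`, see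
`cotMatrix_BCfin`. -/
def bcCotMatrix (m : Fin n → ℂ) (r s q : ℂ) (x : Fin n → ℂ) (i : Fin n) :
    Matrix (Fin n) (Fin n) ℂ :=
  bcCotCoeff m r s q x i • vecMulVec (esgl n i) (esgl n i) +
    q • (vecMulVec (esgl n i) (cotDiffVec m x i) + vecMulVec (cotDiffVec m x i) (esgl n i) +
      diagonal fun p => m p * cotDiff (x p) (x i))

variable {m : Fin n → ℂ} {r s q : ℂ} {c : (Fin n → ℂ) → ℂ}

lemma gramMatrix_BCfin (hc : IsBCMultiplicity m r s q c) :
    gramMatrix (BCfin n) c = (r + 4 * s + 2 * q * (∑ i, m i - 1)) • diagonal m := by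
  ext p k
  have hsum := sum_BCfin_eq_of_pair (f := fun α => c α * α p * α k)
    (d := fun i => (r + 4 * s - 2 * q) * m i * esgl n i k * esgl n i p)
    (g := fun i j => 2 * q * m i * m j * esgl n i k * esgl n i p)
    (fun i => by
      simp only [hc.single, hc.double, Pi.smul_apply, smul_eq_mul]
      ring)
    fun i j hij => by
      simp only [(hc.pair i j hij).1, (hc.pair i j hij).2, Pi.add_apply, Pi.sub_apply]
      ring
  simp only [← sum_mul, ← mul_sum, sum_mul_esgl] at hsum
  rw [gramMatrix, of_apply, hsum, Matrix.smul_apply, diagonal_apply_eq_mul_esgl, smul_eq_mul]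
  ring

lemma cotMatrix_BCfin (hc : IsBCMultiplicity m r s q c) {x : Fin n → ℂ}
    (hx : ∀ α ∈ BCfin n, Complex.sin (ev α x) ≠ 0) (i : Fin n) :
    cotMatrix (BCfin n) c x i = m i • bcCotMatrix m r s q x i := by
  ext p k
  have hsum := sum_BCfin_eq_of_pair (f := fun α => c α * α i * α p * α k * ccot (ev α x))
    (d := fun a => m a * (r * ccot (x a) + (8 * s + 4 * q * (m a - 1)) * ccot (2 * x a)) *
      esgl n a p * esgl n a k * esgl n a i)
    (g := fun a b => q * m a * m b * cotDiff (x a) (x b) *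
      (esgl n b i * esgl n b p * esgl n b k + esgl n b i * esgl n a p * esgl n a k +
        esgl n a i * esgl n b p * esgl n a k + esgl n a i * esgl n a p * esgl n b k))
    (fun a => by
      simp only [hc.single, hc.double, Pi.smul_apply, smul_eq_mul, ev_smul, ev_esgl, cotDiff_self]
      ring)
    fun a b hab => by
      rw [← ccot_add_sub_ccot_sub (sin_add_ne_zero_of_regular hx hab)
        (sin_sub_ne_zero_of_regular hx hab),
        ← ccot_add_add_ccot_sub (sin_add_ne_zero_of_regular hx hab)
        (sin_sub_ne_zero_of_regular hx hab)]
      simp only [(hc.pair a b hab).1, (hc.pair a b hab).2, Pi.add_apply, Pi.sub_apply, ev_add,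
        ev_sub, ev_esgl]
      ring
  have hcoeff : ∑ a, q * m a * m i * cotDiff (x a) (x i) =
      m i * (q * ∑ a, m a * cotDiff (x a) (x i)) := by
    simp only [mul_sum]
    exact sum_congr rfl fun a _ => by ring
  rw [cotMatrix, of_apply, hsum, sum_mul_esgl, sum_sum_mul_esgl, hcoeff]
  simp only [Matrix.smul_apply, bcCotMatrix, Matrix.add_apply, vecMulVec_apply,
    diagonal_apply_eq_mul_esgl, bcCotCoeff, cotDiffVec, smul_eq_mul]
  ring

section Curvature

variable {x : Fin n → ℂ} {i j : Fin n}

lemma bcCotMatrix_mul_diagonal_inv_mul_apply (hm : ∀ k, m k ≠ 0) (M : Matrix (Fin n) (Fin n) ℂ)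
    (p l : Fin n) :
    (bcCotMatrix m r s q x i * diagonal m⁻¹ * M) p l =
      (bcCotCoeff m r s q x i * esgl n i p + q * cotDiffVec m x i p) * (m i)⁻¹ * M i l +
        q * esgl n i p * ∑ k, cotDiff (x i) (x k) * M k l +
        q * cotDiff (x p) (x i) * M p l := by
  have hterm : ∀ k, bcCotMatrix m r s q x i p k * (m k)⁻¹ * M k l =
      (bcCotCoeff m r s q x i * esgl n i p + q * cotDiffVec m x i p) * (m k)⁻¹ * M k l *
          esgl n k i +
        q * esgl n i p * (cotDiff (x i) (x k) * M k l) +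
        q * cotDiff (x k) (x i) * M k l * esgl n k p := by
    intro k
    have hdiag : m p * (m k)⁻¹ * cotDiff (x p) (x i) * esgl n p k =
        cotDiff (x k) (x i) * esgl n k p := by
      obtain rfl | hpk := eq_or_ne p k
      · rw [mul_inv_cancel₀ (hm p), one_mul]
      · simp [esgl_apply, hpk, hpk.symm]
    have hvec : cotDiffVec m x i k * (m k)⁻¹ = cotDiff (x i) (x k) := by
      rw [cotDiffVec, mul_right_comm, mul_inv_cancel₀ (hm k), one_mul]
    simp only [bcCotMatrix, Matrix.add_apply, Matrix.smul_apply, vecMulVec_apply,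
      diagonal_apply_eq_mul_esgl, smul_eq_mul, esgl_apply_comm i k]
    linear_combination q * M k l * (hdiag + esgl n i p * hvec)
  rw [mul_apply]
  simp only [mul_diagonal, Pi.inv_apply, hterm, sum_add_distrib, sum_mul_esgl, ← mul_sum]

lemma bcCotMatrix_apply_of_ne (hij : i ≠ j) (l : Fin n) :
    bcCotMatrix m r s q x j i l =
      q * m i * (cotDiff (x j) (x i) * esgl n j l + cotDiff (x i) (x j) * esgl n i l) := by
  have hzero : esgl n j i = 0 := Pi.single_eq_of_ne hij 1
  simp only [bcCotMatrix, Matrix.add_apply, Matrix.smul_apply, vecMulVec_apply, hzero,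
    diagonal_apply_eq_mul_esgl, cotDiffVec, smul_eq_mul]
  ring

lemma sum_cotDiff_mul_bcCotMatrix (i j l : Fin n) :
    ∑ k, cotDiff (x i) (x k) * bcCotMatrix m r s q x j k l =
      bcCotCoeff m r s q x j * cotDiff (x i) (x j) * esgl n j l +
        q * (cotDiff (x i) (x j) * cotDiffVec m x j l +
          (∑ k, m k * cotDiff (x i) (x k) * cotDiff (x j) (x k)) * esgl n j l +
          cotDiff (x l) (x j) * cotDiffVec m x i l) := by
  have hterm : ∀ k, cotDiff (x i) (x k) * bcCotMatrix m r s q x j k l =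
      (bcCotCoeff m r s q x j * esgl n j l + q * cotDiffVec m x j l) * cotDiff (x i) (x k) *
          esgl n k j +
        q * (m k * cotDiff (x i) (x k) * cotDiff (x j) (x k) * esgl n j l) +
        q * m k * cotDiff (x i) (x k) * cotDiff (x k) (x j) * esgl n k l := by
    intro k
    simp only [bcCotMatrix, Matrix.add_apply, Matrix.smul_apply, vecMulVec_apply,
      diagonal_apply_eq_mul_esgl, smul_eq_mul, esgl_apply_comm j k, cotDiffVec]
    ring
  simp only [hterm, sum_add_distrib, sum_mul_esgl, ← mul_sum, ← sum_mul]
  simp only [cotDiffVec]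
  ring

lemma bcCotMatrix_mul_diagonal_inv_mul_bcCotMatrix_apply (hm : ∀ k, m k ≠ 0) (hij : i ≠ j)
    (p l : Fin n) :
    (bcCotMatrix m r s q x i * diagonal m⁻¹ * bcCotMatrix m r s q x j) p l =
      q * (bcCotCoeff m r s q x i * cotDiff (x j) (x i) +
          bcCotCoeff m r s q x j * cotDiff (x i) (x j) +
          q * ∑ k, m k * cotDiff (x i) (x k) * cotDiff (x j) (x k)) * esgl n i p * esgl n j l +
        q * bcCotCoeff m r s q x i * cotDiff (x i) (x j) * esgl n i p * esgl n i l +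
        q * bcCotCoeff m r s q x j * cotDiff (x j) (x i) * esgl n j p * esgl n j l +
        q ^ 2 * (cotDiff (x i) (x j) * cotDiffVec m x j l +
          cotDiff (x l) (x j) * cotDiffVec m x i l) * esgl n i p +
        q ^ 2 * (cotDiff (x j) (x i) * cotDiffVec m x i p +
          cotDiff (x p) (x i) * cotDiffVec m x j p) * esgl n j l +
        q ^ 2 * cotDiff (x i) (x j) * cotDiffVec m x i p * esgl n i l +
        q ^ 2 * cotDiff (x j) (x i) * cotDiffVec m x j l * esgl n j p +
        q ^ 2 * m p * cotDiff (x p) (x i) * cotDiff (x p) (x j) * esgl n p l := by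
  have hp : cotDiff (x p) (x i) * esgl n j p = cotDiff (x j) (x i) * esgl n j p := by
    obtain rfl | hpj := eq_or_ne p j
    · rfl
    · simp [esgl_apply, hpj]
  rw [bcCotMatrix_mul_diagonal_inv_mul_apply hm, sum_cotDiff_mul_bcCotMatrix,
    bcCotMatrix_apply_of_ne hij]
  simp only [bcCotMatrix, Matrix.add_apply, Matrix.smul_apply, vecMulVec_apply,
    diagonal_apply_eq_mul_esgl, smul_eq_mul]
  linear_combination
    q * (bcCotCoeff m r s q x j * esgl n j l + q * cotDiffVec m x j l) * hp +
    q * (bcCotCoeff m r s q x i * esgl n i p + q * cotDiffVec m x i p) *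
      (cotDiff (x j) (x i) * esgl n j l + cotDiff (x i) (x j) * esgl n i l) *
      inv_mul_cancel₀ (hm i)

lemma cotDiff_mul_cotDiffVec_exchange
    (hx : Pairwise fun a b => Complex.cos (2 * x a) ≠ Complex.cos (2 * x b)) (hij : i ≠ j)
    (k : Fin n) :
    cotDiff (x i) (x j) * cotDiffVec m x j k + cotDiff (x k) (x j) * cotDiffVec m x i k -
        cotDiff (x i) (x j) * cotDiffVec m x i k =
      m i * cotDiff (x i) (x j) * cotDiff (x j) (x i) * esgl n i k -
        m j * cotDiff (x i) (x j) ^ 2 * esgl n j k := by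
  obtain rfl | hki := eq_or_ne k i
  · simp only [cotDiffVec, cotDiff_self, esgl_apply, hij, ↓reduceIte]
    ring
  obtain rfl | hkj := eq_or_ne k j
  · simp only [cotDiffVec, cotDiff_self, esgl_apply, hki, ↓reduceIte]
    ring
  · simp only [cotDiffVec, esgl_apply, hki, hkj, ↓reduceIte]
    linear_combination (-m k) * cotDiff_mul_cotDiff_eq (hx hij) (hx hki.symm) (hx hkj.symm)

lemma sum_mul_cotDiff_cyclic
    (hx : Pairwise fun a b => Complex.cos (2 * x a) ≠ Complex.cos (2 * x b)) (hij : i ≠ j) :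
    ∑ k, m k * (cotDiff (x j) (x i) * cotDiff (x k) (x i) +
      cotDiff (x i) (x j) * cotDiff (x k) (x j) + cotDiff (x i) (x k) * cotDiff (x j) (x k)) =
      -4 * ∑ k, m k + m i * (cotDiff (x i) (x j) ^ 2 + 4) +
        m j * (cotDiff (x j) (x i) ^ 2 + 4) := by
  have hterm : ∀ k, m k * (cotDiff (x j) (x i) * cotDiff (x k) (x i) +
      cotDiff (x i) (x j) * cotDiff (x k) (x j) + cotDiff (x i) (x k) * cotDiff (x j) (x k)) =
      -4 * m k + m k * (cotDiff (x i) (x j) ^ 2 + 4) * esgl n k i +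
        m k * (cotDiff (x j) (x i) ^ 2 + 4) * esgl n k j := by
    intro k
    obtain rfl | hki := eq_or_ne k i
    · simp only [cotDiff_self, esgl_apply, hij.symm, ↓reduceIte]
      ring
    obtain rfl | hkj := eq_or_ne k j
    · simp only [cotDiff_self, esgl_apply, hij, ↓reduceIte]
      ring
    · simp only [esgl_apply, hki.symm, hkj.symm, ↓reduceIte]
      linear_combination m k * cotDiff_cyclic_sum (hx hij) (hx hki.symm) (hx hkj.symm)
  simp only [hterm, sum_add_distrib, ← mul_sum, sum_mul_esgl]

lemma bcCotCoeff_mul_cotDiff_add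
    (hsin : ∀ a, Complex.sin (2 * x a) ≠ 0)
    (hcos : Pairwise fun a b => Complex.cos (2 * x a) ≠ Complex.cos (2 * x b)) (hij : i ≠ j) :
    bcCotCoeff m r s q x i * cotDiff (x j) (x i) + bcCotCoeff m r s q x j * cotDiff (x i) (x j) +
        q * ∑ k, m k * cotDiff (x i) (x k) * cotDiff (x j) (x k) =
      q * (m j * cotDiff (x i) (x j) ^ 2 + m i * cotDiff (x j) (x i) ^ 2) -
        2 * (r + 8 * s + 2 * (∑ k, m k - 2) * q) := by
  have hcyclic := sum_mul_cotDiff_cyclic (m := m) hcos hij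
  have hsplit : ∑ k, m k * (cotDiff (x j) (x i) * cotDiff (x k) (x i) +
      cotDiff (x i) (x j) * cotDiff (x k) (x j) + cotDiff (x i) (x k) * cotDiff (x j) (x k)) =
      (∑ k, m k * cotDiff (x k) (x i)) * cotDiff (x j) (x i) +
        (∑ k, m k * cotDiff (x k) (x j)) * cotDiff (x i) (x j) +
        ∑ k, m k * cotDiff (x i) (x k) * cotDiff (x j) (x k) := by
    simp only [sum_mul, ← sum_add_distrib]
    exact sum_congr rfl fun k _ => by ring
  rw [bcCotCoeff, bcCotCoeff]
  linear_combination q * (hcyclic - hsplit) +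
    r * cotDiff_mul_ccot_add_cotDiff_mul_ccot (hsin i) (hsin j) (hcos hij) +
    (8 * s + 4 * q * (m i - 1)) * cotDiff_mul_ccot_two_mul (hsin i) (hcos hij) +
    (8 * s + 4 * q * (m j - 1)) * cotDiff_mul_ccot_two_mul (hsin j) (hcos hij.symm)

lemma bcCotMatrix_curvature (hm : ∀ k, m k ≠ 0)
    (hsin : ∀ a, Complex.sin (2 * x a) ≠ 0)
    (hcos : Pairwise fun a b => Complex.cos (2 * x a) ≠ Complex.cos (2 * x b)) (hij : i ≠ j) :
    bcCotMatrix m r s q x i * diagonal m⁻¹ * bcCotMatrix m r s q x j -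
        bcCotMatrix m r s q x j * diagonal m⁻¹ * bcCotMatrix m r s q x i =
      (2 * (q * (r + 8 * s + 2 * (∑ k, m k - 2) * q))) •
        (vecMulVec (esgl n j) (esgl n i) - vecMulVec (esgl n i) (esgl n j)) := by
  ext p l
  simp only [Matrix.sub_apply, Matrix.smul_apply, vecMulVec_apply, smul_eq_mul,
    bcCotMatrix_mul_diagonal_inv_mul_bcCotMatrix_apply hm hij,
    bcCotMatrix_mul_diagonal_inv_mul_bcCotMatrix_apply hm hij.symm]
  have hcoeff := fun {i j} (hij : i ≠ j) =>
    bcCotCoeff_mul_cotDiff_add (m := m) (r := r) (s := s) (q := q) hsin hcos hij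
  have hexch := fun {i j} (hij : i ≠ j) => cotDiff_mul_cotDiffVec_exchange (m := m) hcos hij
  linear_combination q * (esgl n i p * esgl n j l) * hcoeff hij -
    q * (esgl n j p * esgl n i l) * hcoeff hij.symm +
    q ^ 2 * (esgl n i p * hexch hij l + esgl n j l * hexch hij.symm p -
      esgl n j p * hexch hij.symm l - esgl n i l * hexch hij p)

end Curvature

lemma gramMatrix_BCfin_row (hc : IsBCMultiplicity m r s q c) (i : Fin n) :
    gramMatrix (BCfin n) c i = ((r + 4 * s + 2 * q * (∑ k, m k - 1)) * m i) • esgl n i := by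
  ext k
  simp only [gramMatrix_BCfin hc, Matrix.smul_apply, diagonal_apply_eq_mul_esgl, Pi.smul_apply,
    smul_eq_mul, mul_assoc]

lemma isUnit_gramMatrix_BCfin (hc : IsBCMultiplicity m r s q c) (hm : ∀ k, m k ≠ 0)
    (hh : r + 4 * s + 2 * q * (∑ k, m k - 1) ≠ 0) : IsUnit (gramMatrix (BCfin n) c) := by
  rw [gramMatrix_BCfin hc, ← diagonal_smul, isUnit_diagonal, Pi.isUnit_iff]
  exact fun k => (mul_ne_zero hh (hm k)).isUnit

lemma gramMatrix_BCfin_inv (hc : IsBCMultiplicity m r s q c) (hm : ∀ k, m k ≠ 0)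
    (hh : r + 4 * s + 2 * q * (∑ k, m k - 1) ≠ 0) :
    (gramMatrix (BCfin n) c)⁻¹ = (r + 4 * s + 2 * q * (∑ k, m k - 1))⁻¹ • diagonal m⁻¹ := by
  refine inv_eq_right_inv ?_
  rw [gramMatrix_BCfin hc, Matrix.smul_mul, Matrix.mul_smul, smul_smul, mul_inv_cancel₀ hh,
    one_smul, diagonal_mul_diagonal, ← diagonal_one]
  exact congrArg diagonal (funext fun k => mul_inv_cancel₀ (hm k))

lemma sum_BCfin_mul_ev_sq (hc : IsBCMultiplicity m r s q c) (ξ : Fin n → ℂ) :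
    ∑ α ∈ BCfin n, c α * ev α ξ ^ 2 =
      (r + 4 * s + 2 * q * (∑ k, m k - 1)) * ∑ i, m i * ξ i ^ 2 := by
  rw [sum_mul_ev_sq, gramMatrix_BCfin hc, smul_mulVec, dotProduct_smul, smul_eq_mul]
  congr 1
  exact sum_congr rfl fun i _ => by rw [mulVec_diagonal]; ring

lemma cotMatrix_BCfin_curvature (hc : IsBCMultiplicity m r s q c) (hm : ∀ k, m k ≠ 0)
    (hh : r + 4 * s + 2 * q * (∑ k, m k - 1) ≠ 0) {lam : ℂ}
    (hlam : lam ^ 2 * (q * (r + 8 * s + 2 * (∑ k, m k - 2) * q)) =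
      2 * (r + 4 * s + 2 * q * (∑ k, m k - 1)) ^ 3)
    {x : Fin n → ℂ} (hx : ∀ α ∈ BCfin n, Complex.sin (ev α x) ≠ 0) (i j : Fin n) :
    lam ^ 2 • (cotMatrix (BCfin n) c x i * (gramMatrix (BCfin n) c)⁻¹ * cotMatrix (BCfin n) c x j -
        cotMatrix (BCfin n) c x j * (gramMatrix (BCfin n) c)⁻¹ * cotMatrix (BCfin n) c x i) =
      (4 : ℂ) • (vecMulVec (gramMatrix (BCfin n) c j) (gramMatrix (BCfin n) c i) -
        vecMulVec (gramMatrix (BCfin n) c i) (gramMatrix (BCfin n) c j)) := by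
  obtain rfl | hij := eq_or_ne i j
  · simp only [sub_self, smul_zero]
  have hcurv := bcCotMatrix_curvature (r := r) (s := s) (q := q) hm
    (sin_two_mul_ne_zero_of_regular hx) (fun _ _ => cos_two_mul_ne_of_regular hx) hij
  simp only [cotMatrix_BCfin hc hx, gramMatrix_BCfin_inv hc hm hh, gramMatrix_BCfin_row hc]
  generalize r + 4 * s + 2 * q * (∑ k, m k - 1) = h at hh hlam ⊢
  calc
    _ = (lam ^ 2 * (m i * m j * h⁻¹)) •
        (bcCotMatrix m r s q x i * diagonal m⁻¹ * bcCotMatrix m r s q x j -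
          bcCotMatrix m r s q x j * diagonal m⁻¹ * bcCotMatrix m r s q x i) := by
      simp only [Matrix.smul_mul, Matrix.mul_smul]
      module
    _ = (4 * (h * m i) * (h * m j)) •
        (vecMulVec (esgl n j) (esgl n i) - vecMulVec (esgl n i) (esgl n j)) := by
      rw [hcurv, smul_smul]
      congr 1
      linear_combination 2 * m i * m j * h⁻¹ * hlam + 4 * m i * m j * h ^ 2 * inv_mul_cancel₀ hh
    _ = _ := by
      simp only [smul_vecMulVec, vecMulVec_smul]
      module

end RestrictedBC

theorem BC_restricted_satisfies_WDVV_general {n : ℕ} {m : Fin n → ℂ} (hm : ∀ i, m i ≠ 0)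
    {r s q lam : ℂ} (hh : r + 4 * s + 2 * q * (∑ i, m i - 1) ≠ 0)
    (hlam : lam ^ 2 * (q * (r + 8 * s + 2 * (∑ i, m i - 2) * q)) =
      2 * (r + 4 * s + 2 * q * (∑ i, m i - 1)) ^ 3)
    {c : (Fin n → ℂ) → ℂ} (hc : IsBCMultiplicity m r s q c) :
    SatisfiesWDVV (BCfin n) c lam ∧
      ∀ ξ : Fin n → ℂ, ∑ α ∈ BCfin n, c α * ev α ξ ^ 2 =
        (r + 4 * s + 2 * q * (∑ i, m i - 1)) * ∑ i, m i * ξ i ^ 2 :=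
  ⟨satisfiesWDVV_of_curvature (isUnit_gramMatrix_BCfin hc hm hh) fun _ hx =>
    cotMatrix_BCfin_curvature hc hm hh hlam hx, sum_BCfin_mul_ev_sq hc⟩

/-- the restricted configuration `BC_n(r,s,q; m)` (obtained from
`BC_N⁺(r,s,q)` with `N = Σ mᵢ`) satisfies the trigonometric WDVV equations, and its
quadratic part is `h Σ mᵢ ξᵢ²` with `h = r + 4s + 2q(N-1)`. -/
theorem BC_restricted_satisfies_WDVV (n : ℕ) (hn : 1 ≤ n) (m : Fin n → ℕ)
    (hm : ∀ i, 0 < m i) (N : ℕ) (hN : N = ∑ i, m i) (r s q lam : ℂ)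
    (hmi : ∀ i, r + 4 * s + 2 * q * ((m i : ℂ) - 1) ≠ 0)
    (hq : q * (r + 8 * s + 2 * ((N : ℂ) - 2) * q) ≠ 0)
    (hh : r + 4 * s + 2 * q * ((N : ℂ) - 1) ≠ 0)
    (hlam : lam ^ 2 = 2 * (r + 4 * s + 2 * q * ((N : ℂ) - 1)) ^ 3 /
      (q * (r + 8 * s + 2 * ((N : ℂ) - 2) * q)))
    (c : (Fin n → ℂ) → ℂ)
    (hc1 : ∀ i : Fin n, c (esgl n i) = r * (m i : ℂ))
    (hc2 : ∀ i : Fin n, c ((2 : ℂ) • esgl n i) =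
      s * (m i : ℂ) + q * (m i : ℂ) * ((m i : ℂ) - 1) / 2)
    (hc3 : ∀ i j : Fin n, i < j →
      c (esgl n i + esgl n j) = q * (m i : ℂ) * (m j : ℂ) ∧
      c (esgl n i - esgl n j) = q * (m i : ℂ) * (m j : ℂ)) :
    SatisfiesWDVV (BCfin n) c lam ∧
      ∀ ξ : Fin n → ℂ, (∑ α ∈ BCfin n, c α * ev α ξ ^ 2) =
        (r + 4 * s + 2 * q * ((N : ℂ) - 1)) * ∑ i, (m i : ℂ) * ξ i ^ 2 := by
  have hNm : (N : ℂ) = ∑ i, (m i : ℂ) := by rw [hN, Nat.cast_sum]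
  rw [hNm] at hq hh hlam ⊢
  exact BC_restricted_satisfies_WDVV_general (fun i => Nat.cast_ne_zero.2 (hm i).ne') hh
    ((eq_div_iff hq).1 hlam) ⟨hc1, hc2, hc3⟩

end
end

section
/- Let N ≥ 1 and t ∈ ℂ, t ≠ 0. Then for all u, v in the hyperplane V = {x ∈ ℂ^{N+1} : Σ_{i=1}^{N+1} x_i = 0}: (i) Σ_{α,β ∈ A_N⁺} t² (α(u)β(v) − α(v)β(u))² = (N+1)² t² Σ_{i,j=1}^{N+1} (u_i v_j − u_j v_i)²; and (ii) Σ_{α,β ∈ A_N⁺} ⟨α,β⟩ (α(u)β(v) − α(v)β(u))² = (N+1) Σ_{i,j=1}^{N+1} (u_i v_j − u_j v_i)², where for α = e^i − e^j and β = e^k − e^l one sets ⟨α,β⟩ = δ_{ik} − δ_{il} − δ_{jk} + δ_{jl}. -/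
open Finset

noncomputable section

/-- The covector `e^i - e^j` of `A_N⁺` attached to a pair `(i, j)`, `i < j`. -/
def aroot (N : ℕ) (p : Fin (N + 1) × Fin (N + 1)) : Fin (N + 1) → ℂ :=
  esgl (N + 1) p.1 - esgl (N + 1) p.2

/-!
Write `w_ij = u_i v_j - u_j v_i`. By Lagrange's identity, the left-hand side of the first identity
is `2 t ^ 2` times the Gram determinant of `u, v` for the form `∑ α, α(x) α(y)`, and
`∑ i j, w_ij ^ 2` is twice their Gram determinant for `∑ i, x_i y_i`; on the hyperplane the first
form is `N + 1` times the second.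

For the second identity, write `⟨α, β⟩ = ∑ a, α_a β_a`, so that only pairs of roots through a
common index `a` contribute: with `ε` the sign of the order, the sum is
`∑ a b c, ε_ab ε_ac (w_ab + w_bc + w_ca) ^ 2`. The square is the sum of the cyclic rotations of
`w_bc ^ 2 + 2 w_ab w_ca`, while the cyclic rotations of `ε_ab ε_ac` add up to `1`. So the sum equals
`∑ a b c, (w_bc ^ 2 + 2 w_ab w_ca)`, in which the cross terms cancel because the column sums of
`w` vanish on the hyperplane.
-/

variable {ι R : Type*}

section CommRing

variable [CommRing R]

/-- The Plücker coordinate of the pair of vectors `x, y`: the determinant of the columns `i` and `j`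
of the matrix with rows `x` and `y`. -/
def minor (x y : ι → R) (i j : ι) : R := x i * y j - x j * y i

/-- The value on the vector `x` of the root `e^i - e^j`, encoded as the pair `p = (i, j)`. At the
basis vector `x = Pi.single a 1` it is the coefficient of `e^a` in that root. -/
def rootEval (x : ι → R) (p : ι × ι) : R := x p.1 - x p.2

theorem minor_rootEval_swap_left (x y : ι → R) (p q : ι × ι) :
    minor (rootEval x) (rootEval y) p.swap q = -minor (rootEval x) (rootEval y) p q := by
  simp only [minor, rootEval, Prod.fst_swap, Prod.snd_swap]
  ring

theorem minor_rootEval_swap_right (x y : ι → R) (p q : ι × ι) :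
    minor (rootEval x) (rootEval y) p q.swap = -minor (rootEval x) (rootEval y) p q := by
  simp only [minor, rootEval, Prod.fst_swap, Prod.snd_swap]
  ring

theorem minor_rootEval_common_fst (x y : ι → R) (a b c : ι) :
    minor (rootEval x) (rootEval y) (a, b) (a, c) =
      minor x y a b + minor x y b c + minor x y c a := by
  simp only [minor, rootEval]
  ring

variable (R) in
/-- The pairing `⟨e^i - e^j, e^k - e^l⟩`, the roots being encoded as pairs of indices. -/
def rootPairing [DecidableEq ι] (p q : ι × ι) : R :=
  (if p.1 = q.1 then 1 else 0) - (if p.1 = q.2 then 1 else 0) -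
    (if p.2 = q.1 then 1 else 0) + (if p.2 = q.2 then 1 else 0)

theorem rootPairing_eq_sum [Fintype ι] [DecidableEq ι] (p q : ι × ι) :
    rootPairing R p q = ∑ a, rootEval (Pi.single a 1) p * rootEval (Pi.single a 1) q := by
  simp only [rootPairing, rootEval, Pi.single_apply, sub_mul, mul_sub, sum_sub_distrib, ite_mul,
    one_mul, zero_mul, sum_ite_eq, mem_univ, if_true, eq_comm (a := q.1), eq_comm (a := q.2)]
  ring

theorem sum_sum_minor_sq (s : Finset ι) (x y : ι → R) :
    ∑ i ∈ s, ∑ j ∈ s, minor x y i j ^ 2 =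
      2 * ((∑ i ∈ s, x i * x i) * (∑ i ∈ s, y i * y i) - (∑ i ∈ s, x i * y i) ^ 2) := by
  have minor_sq (i j : ι) : minor x y i j ^ 2 =
      (x i * x i) * (y j * y j) + (y i * y i) * (x j * x j) - 2 * ((x i * y i) * (x j * y j)) := by
    rw [minor]
    ring
  simp only [minor_sq, sum_add_distrib, sum_sub_distrib, ← mul_sum, ← sum_mul]
  ring

theorem sum_minor_left [Fintype ι] {x y : ι → R} (hx : ∑ i, x i = 0) (hy : ∑ i, y i = 0) (j : ι) :
    ∑ i, minor x y i j = 0 := by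
  simp only [minor, sum_sub_distrib, ← sum_mul, ← mul_sum, hx, hy, zero_mul, mul_zero, sub_zero]

theorem sum_minor_sq_add_two_mul_minor_mul_minor [Fintype ι] {x y : ι → R} (hx : ∑ i, x i = 0)
    (hy : ∑ i, y i = 0) :
    ∑ a, ∑ b, ∑ c, (minor x y b c ^ 2 + 2 * (minor x y a b * minor x y c a)) =
      Fintype.card ι * ∑ i, ∑ j, minor x y i j ^ 2 := by
  simp only [sum_add_distrib, ← mul_sum, sum_minor_left hx hy, mul_zero, add_zero, sum_const,
    card_univ, nsmul_eq_mul]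

end CommRing

section LinearOrder

variable [LinearOrder ι]

theorem sum_filter_lt_add_swap_add_sum_diag {M : Type*} [AddCommMonoid M] [Fintype ι]
    (f : ι → ι → M) :
    ∑ p : ι × ι with p.1 < p.2, (f p.1 p.2 + f p.2 p.1) + ∑ i, f i i = ∑ i, ∑ j, f i j := by
  have sum_gt : ∑ p : ι × ι with p.1 < p.2, f p.2 p.1 = ∑ i, ∑ j, if j < i then f i j else 0 := by
    rw [sum_filter, Fintype.sum_prod_type, sum_comm]
  have sum_diag : ∑ i, f i i = ∑ i, ∑ j, if i = j then f i j else 0 := by simp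
  rw [sum_add_distrib, sum_gt, sum_diag, sum_filter, Fintype.sum_prod_type]
  simp only [← sum_add_distrib]
  refine sum_congr rfl fun i _ ↦ sum_congr rfl fun j _ ↦ ?_
  obtain hij | rfl | hji := lt_trichotomy i j
  · simp [hij, hij.not_gt, hij.ne]
  · simp
  · simp [hji, hji.not_gt, hji.ne']

variable [CommRing R]

theorem sum_filter_lt_rootEval_mul_rootEval [Fintype ι] (x y : ι → R) :
    ∑ p : ι × ι with p.1 < p.2, rootEval x p * rootEval y p =
      Fintype.card ι * ∑ i, x i * y i - (∑ i, x i) * ∑ i, y i := by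
  let F (i j : ι) : R := x i * (y i - y j)
  have split (p : ι × ι) : rootEval x p * rootEval y p = F p.1 p.2 + F p.2 p.1 := by
    simp only [F, rootEval]
    ring
  have F_diag (i : ι) : F i i = 0 := by simp only [F, sub_self, mul_zero]
  calc ∑ p : ι × ι with p.1 < p.2, rootEval x p * rootEval y p
    _ = ∑ p : ι × ι with p.1 < p.2, (F p.1 p.2 + F p.2 p.1) + ∑ i, F i i := by
      simp only [split, F_diag, sum_const_zero, add_zero]
    _ = ∑ i, ∑ j, F i j := sum_filter_lt_add_swap_add_sum_diag F
    _ = Fintype.card ι * ∑ i, x i * y i - (∑ i, x i) * ∑ i, y i := by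
      simp only [F, mul_sub, sum_sub_distrib, sum_const, card_univ, nsmul_eq_mul, ← mul_sum,
        ← sum_mul]

variable (R) in
/-- The sign of `b - a` in a linear order, which is the coefficient of `e^a` in the positive root on
the two indices `a` and `b`. -/
def orderSign (a b : ι) : R :=
  (if a < b then 1 else 0) - if b < a then 1 else 0

-- Of three distinct elements, only the middle one sees the other two on opposite sides, so the
-- terms are `1, 1, -1`. If exactly two coincide, only the term of the third one survives.
theorem orderSign_cyclic_sum {a b c : ι} (h : ¬(a = b ∧ b = c)) :
    orderSign R a b * orderSign R a c + orderSign R b c * orderSign R b a +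
      orderSign R c a * orderSign R c b = 1 := by
  unfold orderSign
  grind

variable [Fintype ι]

theorem sum_orderSign_mul_cyclic (g : ι → ι → ι → R) (hg : ∀ a, g a a a = 0) :
    ∑ a, ∑ b, ∑ c, orderSign R a b * (orderSign R a c * (g a b c + g b c a + g c a b)) =
      ∑ a, ∑ b, ∑ c, g a b c := by
  let s (a b c : ι) : R := orderSign R a b * orderSign R a c
  have sum_rotate (F : ι → ι → ι → R) : ∑ a, ∑ b, ∑ c, F b c a = ∑ a, ∑ b, ∑ c, F a b c :=
    sum_comm_cycle.symm
  have s_cyclic (a b c : ι) : (s a b c + s b c a + s c a b) * g a b c = g a b c := by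
    by_cases h : a = b ∧ b = c
    · obtain ⟨rfl, rfl⟩ := h
      simp [hg]
    · rw [orderSign_cyclic_sum h, one_mul]
  calc ∑ a, ∑ b, ∑ c, orderSign R a b * (orderSign R a c * (g a b c + g b c a + g c a b))
    _ = ∑ a, ∑ b, ∑ c, s a b c * g a b c + ∑ a, ∑ b, ∑ c, s a b c * g b c a +
          ∑ a, ∑ b, ∑ c, s a b c * g c a b := by
      simp only [s, mul_add, sum_add_distrib, mul_assoc]
    _ = ∑ a, ∑ b, ∑ c, s a b c * g a b c + ∑ a, ∑ b, ∑ c, s c a b * g a b c +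
          ∑ a, ∑ b, ∑ c, s b c a * g a b c := by
      rw [sum_rotate fun a b c ↦ s c a b * g a b c, sum_rotate fun a b c ↦ s a b c * g c a b]
    _ = ∑ a, ∑ b, ∑ c, g a b c := by
      simp only [← sum_add_distrib, ← add_mul, add_right_comm, s_cyclic]

theorem sum_filter_lt_rootEval_single_mul (a : ι) {f : ι × ι → R} (hf : ∀ p, f p.swap = f p) :
    ∑ p : ι × ι with p.1 < p.2, rootEval (Pi.single a 1) p * f p =
      ∑ b, orderSign R a b * f (a, b) := by
  let F (i j : ι) : R := (Pi.single a 1 : ι → R) i * (orderSign R i j * f (i, j))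
  have split (p : ι × ι) (hp : p.1 < p.2) :
      rootEval (Pi.single a 1) p * f p = F p.1 p.2 + F p.2 p.1 := by
    have f_swap : f (p.2, p.1) = f p := hf p
    simp only [F, rootEval, orderSign, hp, hp.not_gt, if_true, if_false, f_swap]
    ring
  have F_diag (i : ι) : F i i = 0 := by simp [F, orderSign]
  calc ∑ p : ι × ι with p.1 < p.2, rootEval (Pi.single a 1) p * f p
    _ = ∑ p : ι × ι with p.1 < p.2, (F p.1 p.2 + F p.2 p.1) + ∑ i, F i i := by
      simp only [F_diag, sum_const_zero, add_zero]
      exact sum_congr rfl fun p hp ↦ split p (mem_filter.mp hp).2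
    _ = ∑ i, ∑ j, F i j := sum_filter_lt_add_swap_add_sum_diag F
    _ = ∑ b, orderSign R a b * f (a, b) := by
      simp only [F, ← mul_sum]
      simp [Pi.single_apply]

theorem sum_filter_lt_rootPairing_mul {f : ι × ι → ι × ι → R}
    (hleft : ∀ p q, f p.swap q = f p q) (hright : ∀ p q, f p q.swap = f p q) :
    ∑ p : ι × ι with p.1 < p.2, ∑ q : ι × ι with q.1 < q.2, rootPairing R p q * f p q =
      ∑ a, ∑ b, ∑ c, orderSign R a b * (orderSign R a c * f (a, b) (a, c)) := by
  calc ∑ p : ι × ι with p.1 < p.2, ∑ q : ι × ι with q.1 < q.2, rootPairing R p q * f p q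
    _ = ∑ a, ∑ p : ι × ι with p.1 < p.2, rootEval (Pi.single a 1) p *
          ∑ q : ι × ι with q.1 < q.2, rootEval (Pi.single a 1) q * f p q := by
      simp only [rootPairing_eq_sum, sum_mul, mul_sum, mul_assoc]
      exact sum_comm_cycle
    _ = ∑ a, ∑ p : ι × ι with p.1 < p.2, rootEval (Pi.single a 1) p *
          ∑ c, orderSign R a c * f p (a, c) := by
      simp only [sum_filter_lt_rootEval_single_mul _ (hright _)]
    _ = ∑ a, ∑ b, orderSign R a b * ∑ c, orderSign R a c * f (a, b) (a, c) := by
      refine sum_congr rfl fun a _ ↦ ?_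
      exact sum_filter_lt_rootEval_single_mul a (f := fun p ↦ ∑ c, orderSign R a c * f p (a, c))
        fun p ↦ by simp only [hleft]
    _ = ∑ a, ∑ b, ∑ c, orderSign R a b * (orderSign R a c * f (a, b) (a, c)) := by
      simp only [mul_sum]

theorem sum_filter_lt_minor_rootEval_sq {x y : ι → R} (hx : ∑ i, x i = 0) (hy : ∑ i, y i = 0) :
    ∑ p : ι × ι with p.1 < p.2, ∑ q : ι × ι with q.1 < q.2,
        minor (rootEval x) (rootEval y) p q ^ 2 =
      (Fintype.card ι : R) ^ 2 * ∑ i, ∑ j, minor x y i j ^ 2 := by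
  simp only [sum_sum_minor_sq, sum_filter_lt_rootEval_mul_rootEval, hx, hy, mul_zero, sub_zero]
  ring

theorem sum_filter_lt_rootPairing_mul_minor_rootEval_sq {x y : ι → R}
    (hx : ∑ i, x i = 0) (hy : ∑ i, y i = 0) :
    ∑ p : ι × ι with p.1 < p.2, ∑ q : ι × ι with q.1 < q.2,
        rootPairing R p q * minor (rootEval x) (rootEval y) p q ^ 2 =
      Fintype.card ι * ∑ i, ∑ j, minor x y i j ^ 2 := by
  let g (a b c : ι) : R := minor x y b c ^ 2 + 2 * (minor x y a b * minor x y c a)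
  have minor_common_sq (a b c : ι) :
      minor (rootEval x) (rootEval y) (a, b) (a, c) ^ 2 = g a b c + g b c a + g c a b := by
    rw [minor_rootEval_common_fst]
    ring
  have g_diag (a : ι) : g a a a = 0 := by
    simp only [g, minor]
    ring
  rw [sum_filter_lt_rootPairing_mul
    (fun p q ↦ by rw [minor_rootEval_swap_left, neg_sq])
    (fun p q ↦ by rw [minor_rootEval_swap_right, neg_sq])]
  simp only [minor_common_sq, sum_orderSign_mul_cyclic g g_diag]
  exact sum_minor_sq_add_two_mul_minor_mul_minor hx hy

theorem AN_form_identities_general (t : R) {u v : ι → R} (hu : ∑ i, u i = 0) (hv : ∑ i, v i = 0) :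
    (∑ p : ι × ι with p.1 < p.2, ∑ q : ι × ι with q.1 < q.2,
        t ^ 2 * minor (rootEval u) (rootEval v) p q ^ 2 =
      (Fintype.card ι : R) ^ 2 * t ^ 2 * ∑ i, ∑ j, minor u v i j ^ 2) ∧
    (∑ p : ι × ι with p.1 < p.2, ∑ q : ι × ι with q.1 < q.2,
        rootPairing R p q * minor (rootEval u) (rootEval v) p q ^ 2 =
      Fintype.card ι * ∑ i, ∑ j, minor u v i j ^ 2) := by
  refine ⟨?_, sum_filter_lt_rootPairing_mul_minor_rootEval_sq hu hv⟩
  simp only [← mul_sum, sum_filter_lt_minor_rootEval_sq hu hv]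
  ring

end LinearOrder

theorem wedge_aroot {N : ℕ} (p q : Fin (N + 1) × Fin (N + 1)) (u v : Fin (N + 1) → ℂ) :
    wedge (aroot N p) (aroot N q) u v = minor (rootEval u) (rootEval v) p q := by
  have ev_aroot (r : Fin (N + 1) × Fin (N + 1)) (x : Fin (N + 1) → ℂ) :
      ev (aroot N r) x = rootEval x r := by
    simp [ev, aroot, esgl, rootEval, sub_mul, Pi.single_apply]
  simp only [wedge, minor, ev_aroot, mul_comm (rootEval v p)]

/-- the `G^{(1)}`- and `G^{(2)}`-type identities for the root system
`A_N⁺ = {e^i - e^j : i < j}` on the hyperplane `Σ xᵢ = 0`. -/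
theorem AN_form_identities (N : ℕ) (hN : 1 ≤ N) (t : ℂ) (ht : t ≠ 0)
    (u v : Fin (N + 1) → ℂ) (hu : ∑ i, u i = 0) (hv : ∑ i, v i = 0) :
    (∑ p ∈ Finset.univ.filter (fun p : Fin (N + 1) × Fin (N + 1) => p.1 < p.2),
        ∑ q ∈ Finset.univ.filter (fun q : Fin (N + 1) × Fin (N + 1) => q.1 < q.2),
          t ^ 2 * wedge (aroot N p) (aroot N q) u v ^ 2 =
      ((N : ℂ) + 1) ^ 2 * t ^ 2 *
        ∑ i, ∑ j, (u i * v j - u j * v i) ^ 2) ∧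
    (∑ p ∈ Finset.univ.filter (fun p : Fin (N + 1) × Fin (N + 1) => p.1 < p.2),
        ∑ q ∈ Finset.univ.filter (fun q : Fin (N + 1) × Fin (N + 1) => q.1 < q.2),
          ((if p.1 = q.1 then (1 : ℂ) else 0) - (if p.1 = q.2 then 1 else 0) -
            (if p.2 = q.1 then 1 else 0) + (if p.2 = q.2 then 1 else 0)) *
            wedge (aroot N p) (aroot N q) u v ^ 2 =
      ((N : ℂ) + 1) * ∑ i, ∑ j, (u i * v j - u j * v i) ^ 2) := by
  simpa only [wedge_aroot, minor, rootPairing, Fintype.card_fin, Nat.cast_add, Nat.cast_one] using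
    AN_form_identities_general t hu hv

end
end
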